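/- arXiv:1610.03008 — 4 statements merged into one kernel-verified Lean document; each statement's English description precedes it below -/
import Mathlib

section
/- Let (Σ, dist) be a metric space, τ₀ ∈ ℝ, and let γ̄ : [τ₀, ∞) → Σ be a map satisfying dist(γ̄(s), γ̄(t)) < t − s for all τ₀ ≤ s < t. Then the function T ↦ √((T − τ₀)² − dist(γ̄(τ₀), γ̄(T))²) tends to +∞ as T → ∞. -/
/-- The key distance estimate in the proof of Proposition 2.9: if `γ̄ : [τ₀,∞) → Σ`
is the spatial projection of a future directed timelike curve, i.e.
`dist (γ̄ s) (γ̄ t) < t - s` for all `τ₀ ≤ s < t`, then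
`√((T - τ₀)² - dist(γ̄ τ₀, γ̄ T)²) → ∞` as `T → ∞`. -/
theorem stmt_1 {S : Type*} [MetricSpace S] (τ₀ : ℝ) (γ' : ℝ → S)
    (hγ : ∀ s t : ℝ, τ₀ ≤ s → s < t → dist (γ' s) (γ' t) < t - s) :
    Filter.Tendsto
      (fun T : ℝ => Real.sqrt ((T - τ₀) ^ 2 - dist (γ' τ₀) (γ' T) ^ 2))
      Filter.atTop Filter.atTop := by
  -- `ε` is the slack of the strict inequality on `[τ₀, τ₀ + 1]`; by the triangle inequality
  -- this slack persists: `dist (γ' τ₀) (γ' T) ≤ (T - τ₀) - ε` for every `T > τ₀ + 1`.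
  obtain ⟨ε, hε⟩ : ∃ ε, ε = 1 - dist (γ' τ₀) (γ' (τ₀ + 1)) := ⟨_, rfl⟩
  have hpos : 0 < ε := by
    have := hγ τ₀ (τ₀ + 1) le_rfl (by linarith)
    linarith
  -- Squaring the bound leaves a lower bound that is linear in `T` with slope `2 * ε > 0`.
  have hlin : Filter.Tendsto (fun T : ℝ => 2 * ε * T + (-(2 * ε * τ₀) - ε ^ 2))
      Filter.atTop Filter.atTop :=
    Filter.tendsto_atTop_add_const_right _ _
      (Filter.Tendsto.const_mul_atTop (by positivity) Filter.tendsto_id)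
  refine Real.tendsto_sqrt_atTop.comp (Filter.tendsto_atTop_mono' _ ?_ hlin)
  filter_upwards [Filter.eventually_gt_atTop (τ₀ + 1)] with T hT
  have hfar := hγ (τ₀ + 1) T (by linarith) hT
  have htri := dist_triangle (γ' τ₀) (γ' (τ₀ + 1)) (γ' T)
  have hd : dist (γ' τ₀) (γ' T) ≤ T - τ₀ - ε := by linarith
  have hsq := pow_le_pow_left₀ dist_nonneg hd 2
  nlinarith
end

section
/- Let F, G, Tₜ, Tᵣ, a, a′, r be real numbers with a ≠ 0, satisfying the three equations: −1 = −F·Tₜ² + G·r²·a′², 0 = −F·Tₜ·Tᵣ + G·r·a·a′, and a² = −F·Tᵣ² + G·a². Then 1 − r²·a′² ≠ 0 and G = 1/(1 − r²·a′²). -/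
/-- Equations (6)–(8) in the proof of Theorem 4.1 (Euclidean FLRW metric matching)
determine the coefficient `G` uniquely: `G = 1/(1 − r²a′²)`. -/
theorem stmt_7 (F G Tt Tr a a' r : ℝ) (ha : a ≠ 0)
    (eq1 : -1 = -F * Tt ^ 2 + G * r ^ 2 * a' ^ 2)
    (eq2 : 0 = -F * Tt * Tr + G * r * a * a')
    (eq3 : a ^ 2 = -F * Tr ^ 2 + G * a ^ 2) :
    1 - r ^ 2 * a' ^ 2 ≠ 0 ∧ G = 1 / (1 - r ^ 2 * a' ^ 2) := by
  -- Determinant identity: `(F Tt²)(F Tr²) = (F Tt Tr)²`. Substituting the three equations,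
  -- the terms in `G²` cancel and `a²` times the claimed relation remains.
  have h1 : F * Tt ^ 2 = 1 + G * r ^ 2 * a' ^ 2 := by linarith
  have h2 : F * Tt * Tr = G * r * a * a' := by linarith
  have h3 : F * Tr ^ 2 = (G - 1) * a ^ 2 := by linarith
  have hdet : (1 + G * r ^ 2 * a' ^ 2) * ((G - 1) * a ^ 2) = (G * r * a * a') ^ 2 := by
    rw [← h1, ← h2, ← h3]
    ring
  have key : G * (1 - r ^ 2 * a' ^ 2) = 1 :=
    mul_left_cancel₀ (pow_ne_zero 2 ha) (by linear_combination hdet)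
  have hne : 1 - r ^ 2 * a' ^ 2 ≠ 0 := right_ne_zero_of_mul_eq_one key
  exact ⟨hne, eq_div_of_mul_eq hne key⟩
end

section
/- Let F, G, Tₜ, Tᵣ, a, a′, r be real numbers with a ≠ 0, satisfying the three equations: −1 = −F·Tₜ² + G·(a′·sinh(r))², 0 = −F·Tₜ·Tᵣ + G·(a′·sinh(r))·(a·cosh(r)), and a² = −F·Tᵣ² + G·(a·cosh(r))². Then cosh(r)² − a′²·sinh(r)² ≠ 0 and G = 1/(cosh(r)² − a′²·sinh(r)²). -/
/-- The metric-matching equations in the proof of Theorem 4.3 (hyperbolic FLRW)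
determine the coefficient `G` uniquely: `G = 1/(cosh²r − a′²sinh²r)`. -/
theorem stmt_8 (F G Tt Tr a a' r : ℝ) (ha : a ≠ 0)
    (eq1 : -1 = -F * Tt ^ 2 + G * (a' * Real.sinh r) ^ 2)
    (eq2 : 0 = -F * Tt * Tr + G * (a' * Real.sinh r) * (a * Real.cosh r))
    (eq3 : a ^ 2 = -F * Tr ^ 2 + G * (a * Real.cosh r) ^ 2) :
    Real.cosh r ^ 2 - a' ^ 2 * Real.sinh r ^ 2 ≠ 0 ∧
      G = 1 / (Real.cosh r ^ 2 - a' ^ 2 * Real.sinh r ^ 2) := by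
  -- Since `(F Tt²)(F Tr²) = (F Tt Tr)²`, the three equations eliminate `F`, `Tt`, `Tr` together;
  -- the `G²` terms cancel and what remains is `a²` times the desired identity.
  have key : a ^ 2 * (G * (Real.cosh r ^ 2 - a' ^ 2 * Real.sinh r ^ 2) - 1) = 0 := by
    linear_combination
      -(G * (a * Real.cosh r) ^ 2 - a ^ 2) * eq1 - F * Tt ^ 2 * eq3
        + (F * Tt * Tr + G * (a' * Real.sinh r) * (a * Real.cosh r)) * eq2
  have hG : G * (Real.cosh r ^ 2 - a' ^ 2 * Real.sinh r ^ 2) = 1 :=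
    sub_eq_zero.mp ((mul_eq_zero.mp key).resolve_left (pow_ne_zero 2 ha))
  have hne : Real.cosh r ^ 2 - a' ^ 2 * Real.sinh r ^ 2 ≠ 0 :=
    right_ne_zero_of_mul_eq_one hG
  exact ⟨hne, eq_div_of_mul_eq hne hG⟩
end

section
/- Let S ∈ ℝ and let f : ℝ → ℝ be differentiable on (S, ∞) with f′(s) ≠ 0 for all s > S. Suppose there is c > 0 such that s²·f′(s)² → c² as s → ∞. Then either f(s) → +∞ as s → ∞, or f(s) → −∞ as s → ∞. -/
/-!
By Darboux's theorem the nonvanishing derivative has constant sign on `(S, ∞)`; replacing `f` by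
`-f` if necessary, it is positive. Since `s² f′(s)² → c² > (c/2)²`, eventually `s f′(s) > c/2`, so
`f - (c/2) log` is eventually nondecreasing. Hence `f` is eventually bounded below by
`(c/2) log s` plus a constant, and tends to `+∞`.
-/

/-- The case of a positive derivative, by comparison with `(c / 2) * log`. -/
lemma tendsto_atTop_of_deriv_pos (S c : ℝ) (f : ℝ → ℝ) (hc : 0 < c)
    (hdiff : ∀ s : ℝ, S < s → DifferentiableAt ℝ f s)
    (hpos : ∀ s : ℝ, S < s → 0 < deriv f s)
    (hlim : Filter.Tendsto (fun s => s ^ 2 * (deriv f s) ^ 2)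
      Filter.atTop (nhds (c ^ 2))) :
    Filter.Tendsto f Filter.atTop Filter.atTop := by
  have hev : ∀ᶠ s in Filter.atTop, (c / 2) ^ 2 < s ^ 2 * (deriv f s) ^ 2 :=
    hlim.eventually_const_lt (by nlinarith)
  obtain ⟨A, hA⟩ := Filter.eventually_atTop.1
    (hev.and ((Filter.eventually_gt_atTop S).and (Filter.eventually_gt_atTop 0)))
  have hderiv : ∀ s, A ≤ s →
      HasDerivAt (fun s => f s - c / 2 * Real.log s) (deriv f s - c / 2 * s⁻¹) s := fun s hs =>
    (hdiff s (hA s hs).2.1).hasDerivAt.sub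
      ((Real.hasDerivAt_log (hA s hs).2.2.ne').const_mul (c / 2))
  have hmono : MonotoneOn (fun s => f s - c / 2 * Real.log s) (Set.Ici A) := by
    refine monotoneOn_of_hasDerivWithinAt_nonneg (convex_Ici A)
      (f' := fun s => deriv f s - c / 2 * s⁻¹)
      (fun s hs => (hderiv s hs).continuousAt.continuousWithinAt)
      (fun s hs => (hderiv s (interior_subset hs)).hasDerivWithinAt) fun s hs => ?_
    obtain ⟨h1, h2, h3⟩ := hA s (interior_subset hs)
    have h4 : c / 2 < s * deriv f s := by
      refine lt_of_pow_lt_pow_left₀ 2 (mul_pos h3 (hpos s h2)).le ?_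
      rwa [mul_pow]
    rw [sub_nonneg, ← div_eq_mul_inv, div_le_iff₀ h3]
    linarith
  refine Filter.tendsto_atTop_mono' _ ?_ (Filter.tendsto_atTop_add_const_right _
    (f A - c / 2 * Real.log A) (Real.tendsto_log_atTop.const_mul_atTop (half_pos hc)))
  filter_upwards [Filter.eventually_ge_atTop A] with s hs
  have := hmono Set.self_mem_Ici (Set.mem_Ici.2 hs) hs
  dsimp only at this
  linarith

/-- Analytic content of Theorem 4.1(b): if `f` is differentiable on `(S,∞)` with
`f′ ≠ 0` there and `s²·f′(s)² → c²` for some `c > 0`, then `f → +∞` or `f → −∞`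
as `s → ∞`. -/
theorem stmt_11 (S c : ℝ) (f : ℝ → ℝ) (hc : 0 < c)
    (hdiff : ∀ s : ℝ, S < s → DifferentiableAt ℝ f s)
    (hne : ∀ s : ℝ, S < s → deriv f s ≠ 0)
    (hlim : Filter.Tendsto (fun s => s ^ 2 * (deriv f s) ^ 2)
      Filter.atTop (nhds (c ^ 2))) :
    Filter.Tendsto f Filter.atTop Filter.atTop ∨
      Filter.Tendsto f Filter.atTop Filter.atBot := by
  rcases hasDerivWithinAt_forall_lt_or_forall_gt_of_forall_ne (convex_Ioi S)
    (fun s hs => (hdiff s hs).hasDerivAt.hasDerivWithinAt) hne with hneg | hpos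
  · right
    rw [← Filter.tendsto_neg_atTop_iff]
    refine tendsto_atTop_of_deriv_pos S c (fun s => -f s) hc (fun s hs => (hdiff s hs).neg)
      (fun s hs => ?_) ?_
    · rw [deriv.fun_neg]
      exact neg_pos.2 (hneg s hs)
    · simpa only [deriv.fun_neg, neg_sq] using hlim
  · exact Or.inl (tendsto_atTop_of_deriv_pos S c f hc hdiff hpos hlim)
end
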